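/- arXiv:2309.11788 — 4 statements merged into one kernel-verified Lean document; each statement's English description precedes it below -/
import Mathlib

section
/- A parking preference p ∈ {1,…,n}^n is an MVP parking function if and only if it is a classical parking function; that is, all n cars succeed in parking under the MVP parking process if and only if all n cars succeed under the classical parking process. -/
/- Common definitions: the classical and MVP parking processes, parking
functions, inversion graphs and 1-subgraphs, Motzkin paths, and sandpile
configurations on complete graphs. Spots, cars and vertices are 0-indexed
(element `i : Fin n` corresponds to the 1-indexed `i+1` of the paper). -/

namespace MVPPaper

open Finset

variable {n : ℕ}

/-- The first unoccupied spot `k ≥ s` in the occupancy `occ`, if any exists.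
`occ k = some i` means spot `k` is occupied by car `i`. -/
def firstFree (occ : Fin n → Option (Fin n)) (s : Fin n) : Option (Fin n) :=
  (List.finRange n).find? fun k => decide (s ≤ k) && (occ k).isNone

/-- One step of the classical parking process: car `i`, preferring spot `s`,
parks in the first free spot `k ≥ s` (failure if none exists). -/
def classicalStep (occ : Fin n → Option (Fin n)) (i s : Fin n) :
    Option (Fin n → Option (Fin n)) :=
  (firstFree occ s).map fun k => Function.update occ k (some i)

/-- One step of the MVP parking process: car `i` parks in its preferred spot
`s`; if `s` was occupied by an earlier car `j`, then `j` is bumped out and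
drives on to the first free spot `k ≥ s` (failure if none exists). -/
def mvpStep (occ : Fin n → Option (Fin n)) (i s : Fin n) :
    Option (Fin n → Option (Fin n)) :=
  match occ s with
  | none => some (Function.update occ s (some i))
  | some j =>
      (firstFree (Function.update occ s (some i)) s).map fun k =>
        Function.update (Function.update occ s (some i)) k (some j)

/-- Run a parking process: cars `0, 1, …, n-1` enter in order, with car `i`
preferring spot `p i`. Returns the final occupancy, or `none` on failure. -/
def runProcess
    (step : (Fin n → Option (Fin n)) → Fin n → Fin n → Option (Fin n → Option (Fin n)))
    (p : Fin n → Fin n) : Option (Fin n → Option (Fin n)) :=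
  List.foldlM (fun occ i => step occ i (p i)) (fun _ => none) (List.finRange n)

def mvpRun (p : Fin n → Fin n) : Option (Fin n → Option (Fin n)) :=
  runProcess mvpStep p

def classicalRun (p : Fin n → Fin n) : Option (Fin n → Option (Fin n)) :=
  runProcess classicalStep p

/-- All cars park successfully under the MVP process. -/
def IsMVPParking (p : Fin n → Fin n) : Prop := (mvpRun p).isSome

/-- All cars park successfully under the classical process. -/
def IsClassicalParking (p : Fin n → Fin n) : Prop := (classicalRun p).isSome

/-- `MVPOutcome p π` means that the MVP parking process for `p` succeeds, and
car `π i` finally occupies spot `i` for all `i`; that is, `O_MVP(p) = π`. -/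
def MVPOutcome (p : Fin n → Fin n) (π : Equiv.Perm (Fin n)) : Prop :=
  ∃ occ, mvpRun p = some occ ∧ ∀ i, occ i = some (π i)

/-- `p` is a parking function: for every `k`, at least `k+1` cars prefer a spot
`≤ k` (the classical counting characterisation, 0-indexed). -/
def IsParkingFunction (p : Fin n → Fin n) : Prop :=
  ∀ k : Fin n, (k : ℕ) + 1 ≤ (univ.filter fun i => p i ≤ k).card

/-- The fibre of the MVP outcome map over `π`: parking functions with MVP
outcome `π`. -/
def FibMVP (π : Equiv.Perm (Fin n)) : Set (Fin n → Fin n) :=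
  {p | IsParkingFunction p ∧ MVPOutcome p π}

/-- The set of inversions of `π` (where `π i` is the car occupying spot `i`):
pairs `(j, i)` with `j < i` and `π j > π i`. These are the edges of the
inversion graph `G_π`. -/
def invFinset (π : Equiv.Perm (Fin n)) : Finset (Fin n × Fin n) :=
  univ.filter fun e => e.1 < e.2 ∧ π e.2 < π e.1

/-- The left-inversions of `π` at `i`. -/
def lInv (π : Equiv.Perm (Fin n)) (i : Fin n) : Finset (Fin n) :=
  univ.filter fun j => j < i ∧ π i < π j

/-- A 1-subgraph of the inversion graph of `π`: a set of inversions with at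
most one incident left-arc at each vertex. -/
def IsOneSubgraph (π : Equiv.Perm (Fin n)) (S : Finset (Fin n × Fin n)) : Prop :=
  S ⊆ invFinset π ∧ ∀ i j j' : Fin n, (j, i) ∈ S → (j', i) ∈ S → j = j'

/-- The map `Ψ_{Sub→PF}`: the parking preference `p` where `p (π i) = j` if
`(j, i) ∈ S` (for the unique such `j`), and `p (π i) = i` otherwise. -/
noncomputable def subToPF (π : Equiv.Perm (Fin n)) (S : Finset (Fin n × Fin n)) :
    Fin n → Fin n := fun c =>
  if h : ∃ j, (j, π.symm c) ∈ S then h.choose else π.symm c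

/-- The map `Ψ_{PF→Sub}`: the set of inversions `(j, i)` of `π` with
`p (π i) = j`. -/
def pfToSub (π : Equiv.Perm (Fin n)) (p : Fin n → Fin n) : Finset (Fin n × Fin n) :=
  (invFinset π).filter fun e => p (π e.2) = e.1

/-- A 1-subgraph `S` is valid if the MVP outcome of `Ψ_{Sub→PF}(S)` is `π`. -/
def IsValid (π : Equiv.Perm (Fin n)) (S : Finset (Fin n × Fin n)) : Prop :=
  MVPOutcome (subToPF π S) π

/-- `π` contains the pattern `321`. -/
def Contains321 (π : Equiv.Perm (Fin n)) : Prop :=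
  ∃ i j k : Fin n, i < j ∧ j < k ∧ π k < π j ∧ π j < π i

/-- `π` contains the pattern `3412`. -/
def Contains3412 (π : Equiv.Perm (Fin n)) : Prop :=
  ∃ i j k l : Fin n, i < j ∧ j < k ∧ k < l ∧ π k < π l ∧ π l < π i ∧ π i < π j

/-- `S` is `P⃗₂`-free: there is no triple `i < j < k` with `(i,j) ∈ S` and
`(j,k) ∈ S`. -/
def P2Free (S : Finset (Fin n × Fin n)) : Prop :=
  ¬∃ i j k : Fin n, i < j ∧ j < k ∧ (i, j) ∈ S ∧ (j, k) ∈ S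

/-- `S` is horizontally separated (HS): any two distinct edges `(j,i)` and
`(j',i')` of `S` satisfy `i < j'` or `i' < j`. -/
def IsHS (S : Finset (Fin n × Fin n)) : Prop :=
  ∀ e ∈ S, ∀ e' ∈ S, e ≠ e' → e.2 < e'.1 ∨ e'.2 < e.1

/-- Steps of a Motzkin path: up, horizontal, down. -/
inductive MStep : Type
  | U : MStep
  | H : MStep
  | D : MStep
  deriving DecidableEq

/-- The height change of a step. -/
def stepVal : MStep → ℤ
  | MStep.U => 1
  | MStep.H => 0
  | MStep.D => -1

/-- The number of cars preferring spot `j` in `p`. -/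
def prefCount (p : Fin n → Fin n) (j : Fin n) : ℕ :=
  (univ.filter fun i => p i = j).card

/-- The lattice path `Φ(p)`: step `j` is `U`, `H` or `D` according to whether
spot `j` is preferred by at least two, exactly one, or no cars. -/
def Phi (p : Fin n → Fin n) : Fin n → MStep := fun j =>
  if 2 ≤ prefCount p j then MStep.U
  else if prefCount p j = 1 then MStep.H
  else MStep.D

/-- An `n`-step lattice path is a Motzkin path: it ends at height `0` and no
prefix goes below height `0`. -/
def IsMotzkinPath (φ : Fin n → MStep) : Prop :=
  (∑ j : Fin n, stepVal (φ j)) = 0 ∧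
  ∀ k : Fin n, 0 ≤ ∑ j ∈ univ.filter (fun j : Fin n => j ≤ k), stepVal (φ j)

/-- The decreasing permutation `dec_n = n(n-1)⋯1`: spot `i` gets car `n-1-i`
(0-indexed). -/
def decPerm (n : ℕ) : Equiv.Perm (Fin n) :=
  ⟨Fin.rev, Fin.rev, Fin.rev_rev, Fin.rev_rev⟩

/-- A non-crossing matching arc diagram on `{0, …, n-1}`: arcs go left to
right, each vertex is incident to at most one arc, and no two arcs cross. -/
def IsNonCrossMatching (S : Finset (Fin n × Fin n)) : Prop :=
  (∀ e ∈ S, e.1 < e.2) ∧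
  (∀ e ∈ S, ∀ e' ∈ S, e ≠ e' →
    e.1 ≠ e'.1 ∧ e.1 ≠ e'.2 ∧ e.2 ≠ e'.1 ∧ e.2 ≠ e'.2) ∧
  ¬∃ i j k l : Fin n, i < j ∧ j < k ∧ k < l ∧ (i, k) ∈ S ∧ (j, l) ∈ S

/-- A stable configuration `c` (grain counts, each `< n`) on the complete graph
`K_n` is recurrent; by Dhar's burning criterion this amounts on `K_n` to the
existence of an ordering `v` of the vertices with `c (v k) ≥ n - (k+1)` for
every `k` (0-indexed). -/
def IsRecurrentK (c : Fin n → ℕ) : Prop :=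
  (∀ i, c i < n) ∧ ∃ v : Equiv.Perm (Fin n), ∀ k : Fin n, n ≤ c (v k) + (k : ℕ) + 1

theorem map_foldlM_congr {α β γ δ : Type*} {f : α → γ → Option α} {g : β → γ → Option β}
    {φ : α → δ} {ψ : β → δ}
    (hstep : ∀ a b c, φ a = ψ b → (f a c).map φ = (g b c).map ψ) (l : List γ) {a : α} {b : β}
    (hab : φ a = ψ b) : (l.foldlM f a).map φ = (l.foldlM g b).map ψ := by
  induction l generalizing a b with
  | nil => exact congrArg some hab
  | cons c l ih =>
    have hc := (hstep a b c hab).symm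
    cases hf : f a c with
    | none =>
      rw [hf, Option.map_none, Option.map_eq_none_iff] at hc
      simp only [List.foldlM_cons, hf, hc, Option.bind_eq_bind, Option.bind_none, Option.map_none]
    | some a' =>
      rw [hf, Option.map_some, Option.map_eq_some_iff] at hc
      obtain ⟨b', hg, hab'⟩ := hc
      simpa only [List.foldlM_cons, hf, hg, Option.bind_eq_bind, Option.bind_some]
        using ih hab'.symm

/-- The spots left vacant by an occupancy. The processes are compared through this set alone,
because the cars' identities do not influence where the next car drives to. -/
def vacantSpots (occ : Fin n → Option (Fin n)) : Finset (Fin n) :=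
  univ.filter fun k => occ k = none

section Vacancy

variable {occ : Fin n → Option (Fin n)} {k s : Fin n}

theorem mem_vacantSpots : k ∈ vacantSpots occ ↔ occ k = none := by
  simp only [vacantSpots, mem_filter, mem_univ, true_and]

theorem vacantSpots_update_some (occ : Fin n → Option (Fin n)) (k i : Fin n) :
    vacantSpots (Function.update occ k (some i)) = (vacantSpots occ).erase k := by
  ext m
  by_cases hm : m = k <;> simp [mem_vacantSpots, hm]

theorem firstFree_congr {occ' : Fin n → Option (Fin n)} (h : vacantSpots occ = vacantSpots occ')
    (s : Fin n) : firstFree occ s = firstFree occ' s := by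
  have isNone_eq (k : Fin n) : (occ k).isNone = (occ' k).isNone := by
    rw [Bool.eq_iff_iff, Option.isNone_iff_eq_none, Option.isNone_iff_eq_none,
      ← mem_vacantSpots, ← mem_vacantSpots, h]
  simp only [firstFree, isNone_eq]

theorem firstFree_eq_some_self (hs : occ s = none) : firstFree occ s = some s := by
  rw [firstFree, ← Fin.find?_eq_find?_finRange, Fin.find?_eq_some_iff]
  refine ⟨by simp only [le_refl, hs, decide_true, Option.isNone_none, Bool.and_self], ?_⟩
  intro k hk
  simp only [hk.not_ge, decide_false, Bool.false_and]

end Vacancy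

section Step

variable (occ : Fin n → Option (Fin n)) (i s : Fin n)

theorem map_vacantSpots_classicalStep :
    (classicalStep occ i s).map vacantSpots = (firstFree occ s).map (vacantSpots occ).erase := by
  simp only [classicalStep, Option.map_map, Function.comp_def, vacantSpots_update_some]

theorem map_vacantSpots_mvpStep :
    (mvpStep occ i s).map vacantSpots = (firstFree occ s).map (vacantSpots occ).erase := by
  cases hs : occ s with
  | none =>
    simp only [mvpStep, hs, firstFree_eq_some_self hs, Option.map_some, vacantSpots_update_some]
  | some j =>
    -- Replacing `j` by `i` in spot `s` frees nothing, so `j` drives to where `i` would have gone.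
    have vacantSpots_swap : vacantSpots (Function.update occ s (some i)) = vacantSpots occ := by
      rw [vacantSpots_update_some, erase_eq_of_notMem (by simp [mem_vacantSpots, hs])]
    simp only [mvpStep, hs, Option.map_map, Function.comp_def, vacantSpots_update_some _ _ j,
      vacantSpots_swap, firstFree_congr vacantSpots_swap]

end Step

theorem statement0_general (p : Fin n → Fin n) (cars : List (Fin n))
    (occ : Fin n → Option (Fin n)) :
    (cars.foldlM (fun occ i => mvpStep occ i (p i)) occ).map vacantSpots =
      (cars.foldlM (fun occ i => classicalStep occ i (p i)) occ).map vacantSpots := by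
  refine map_foldlM_congr (fun a b i hab => ?_) cars rfl
  rw [map_vacantSpots_mvpStep, map_vacantSpots_classicalStep, firstFree_congr hab, hab]

/-- A parking preference `p` is an MVP parking function if and
only if it is a classical parking function. -/
theorem statement0 (n : ℕ) (p : Fin n → Fin n) :
    IsMVPParking p ↔ IsClassicalParking p := by
  have isSome_eq : (mvpRun p).isSome = (classicalRun p).isSome := by
    simpa only [mvpRun, classicalRun, runProcess, Option.isSome_map] using
      congrArg Option.isSome (statement0_general p (List.finRange n) fun _ => none)
  rw [IsMVPParking, IsClassicalParking, isSome_eq]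

end MVPPaper
end

section
/- For every permutation π ∈ S_n: (i) for every 1-subgraph S ∈ Sub(π), Ψ_{Sub→PF}(S) is a parking function, and the map Ψ_{Sub→PF} : Sub(π) → PF_n is injective; (ii) for every parking function p with O_MVP(p) = π, one has Ψ_{Sub→PF}(Ψ_{PF→Sub}(p)) = p; in particular Ψ_{PF→Sub} is injective on the fibre Fib_n(π). -/
/- Common definitions: the classical and MVP parking processes, parking
functions, inversion graphs and 1-subgraphs, Motzkin paths, and sandpile
configurations on complete graphs. Spots, cars and vertices are 0-indexed
(element `i : Fin n` corresponds to the 1-indexed `i+1` of the paper). -/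

namespace MVPPaper

open Finset

variable {n : ℕ}

/-! Each car ends at or to the right of its preferred spot, and once a spot is occupied its occupant
is only ever replaced by a later car. So if `p` has outcome `π`, then `p (π i) ≤ i`, and spot
`p (π i)` finally holds a car with label at least `π i`: either `p (π i) = i` or `(p (π i), i)` is
an inversion. Hence `Ψ_{PF→Sub}` forgets nothing about `p`. Conversely, `Ψ_{PF→Sub}` recovers a
1-subgraph from its image under `Ψ_{Sub→PF}`. Both injectivity statements thus come from one-sided
inverses. -/

section MVPProcess

variable {p : Fin n → Fin n} {occ occ' : Fin n → Option (Fin n)} {i s t k c : Fin n}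

lemma le_and_eq_none_of_firstFree_eq_some (h : firstFree occ s = some k) :
    s ≤ k ∧ occ k = none := by
  simpa only [Bool.and_eq_true, decide_eq_true_eq, Option.isNone_iff_eq_none]
    using List.find?_some h

lemma mvpStep_cases (h : mvpStep occ i s = some occ') :
    (occ s = none ∧ occ' = Function.update occ s (some i)) ∨
      ∃ j k, occ s = some j ∧ s < k ∧ occ k = none ∧
        occ' = Function.update (Function.update occ s (some i)) k (some j) := by
  unfold mvpStep at h
  split at h
  case h_1 hfree => exact .inl ⟨hfree, (Option.some.inj h).symm⟩
  case h_2 j hj =>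
    obtain ⟨k, hk, rfl⟩ := Option.map_eq_some_iff.mp h
    obtain ⟨hsk, hnone⟩ := le_and_eq_none_of_firstFree_eq_some hk
    have hne : k ≠ s := by
      rintro rfl
      simp at hnone
    rw [Function.update_of_ne hne] at hnone
    exact .inr ⟨j, k, hj, lt_of_le_of_ne hsk hne.symm, hnone, rfl⟩

lemma mvpStep_apply_self (h : mvpStep occ i s = some occ') : occ' s = some i := by
  obtain ⟨-, rfl⟩ | ⟨j, k, -, hsk, -, rfl⟩ := mvpStep_cases h
  · exact Function.update_self ..
  · rw [Function.update_of_ne hsk.ne, Function.update_self]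

lemma mvpStep_apply_of_ne (h : mvpStep occ i s = some occ') (hts : t ≠ s) (ht : occ t = some c) :
    occ' t = some c := by
  obtain ⟨-, rfl⟩ | ⟨j, k, -, -, hk, rfl⟩ := mvpStep_cases h
  · rwa [Function.update_of_ne hts]
  · have htk : t ≠ k := by
      rintro rfl
      simp [ht] at hk
    rwa [Function.update_of_ne htk, Function.update_of_ne hts]

lemma eq_or_exists_le_of_mvpStep (h : mvpStep occ i s = some occ') (ht : occ' t = some c) :
    (t = s ∧ c = i) ∨ ∃ t' ≤ t, occ t' = some c := by
  obtain ⟨-, rfl⟩ | ⟨j, k, hj, hsk, -, rfl⟩ := mvpStep_cases h <;>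
    grind [Function.update_apply]

lemma runProcess_induction
    {step : (Fin n → Option (Fin n)) → Fin n → Fin n → Option (Fin n → Option (Fin n))}
    {motive : ℕ → (Fin n → Option (Fin n)) → Prop} (zero : motive 0 fun _ => none)
    (succ : ∀ (i : Fin n) occ occ', motive i occ → step occ i (p i) = some occ' →
      motive (i + 1) occ')
    (h : runProcess step p = some occ) : motive n occ := by
  have hprefix : ∀ m ≤ n, ∀ occ, ((List.finRange n).take m).foldlM
      (fun occ i => step occ i (p i)) (fun _ => none) = some occ → motive m occ := by
    intro m
    induction m with
    | zero =>
      intro _ occ hocc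
      exact Option.some.inj hocc ▸ zero
    | succ m ih =>
      intro hm occ' hocc'
      rw [← List.take_concat_get' _ m (by simpa using hm), List.foldlM_append] at hocc'
      obtain ⟨occ, hocc, hstep⟩ := Option.bind_eq_some_iff.mp hocc'
      exact succ ⟨m, hm⟩ occ occ' (ih (by lia) occ hocc) (by simpa using hstep)
  exact hprefix n le_rfl occ <| by
    rwa [List.take_of_length_le List.length_finRange.le]

/-- The invariant of the MVP process for the preference `p` after its first `m` cars have entered:
every parked car is at or to the right of its preferred spot, which holds this car or a later
one. -/
structure MVPInvariant (p : Fin n → Fin n) (m : ℕ) (occ : Fin n → Option (Fin n)) : Prop where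
  car_lt : ∀ {s c}, occ s = some c → (c : ℕ) < m
  pref_le : ∀ {s c}, occ s = some c → p c ≤ s
  exists_le_occupant : ∀ {s c}, occ s = some c → ∃ c', c ≤ c' ∧ occ (p c) = some c'

lemma MVPInvariant.mvpStep (hinv : MVPInvariant p i occ) (h : mvpStep occ i (p i) = some occ') :
    MVPInvariant p (i + 1) occ' where
  car_lt ht := by
    obtain ⟨-, rfl⟩ | ⟨t', -, ht'⟩ := eq_or_exists_le_of_mvpStep h ht
    · exact Nat.lt_succ_self _
    · exact (hinv.car_lt ht').trans (Nat.lt_succ_self _)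
  pref_le ht := by
    obtain ⟨rfl, rfl⟩ | ⟨t', htt', ht'⟩ := eq_or_exists_le_of_mvpStep h ht
    · exact le_rfl
    · exact (hinv.pref_le ht').trans htt'
  exists_le_occupant {t c} ht := by
    obtain ⟨-, rfl⟩ | ⟨t', -, ht'⟩ := eq_or_exists_le_of_mvpStep h ht
    · exact ⟨c, le_rfl, mvpStep_apply_self h⟩
    · by_cases hpref : p c = p i
      · exact ⟨i, (hinv.car_lt ht').le, hpref ▸ mvpStep_apply_self h⟩
      · obtain ⟨c', hcc', hc'⟩ := hinv.exists_le_occupant ht'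
        exact ⟨c', hcc', mvpStep_apply_of_ne h hpref hc'⟩

lemma mvpInvariant_of_mvpRun_eq_some (h : mvpRun p = some occ) : MVPInvariant p n occ :=
  runProcess_induction (motive := MVPInvariant p) ⟨nofun, nofun, nofun⟩
    (fun _ _ _ hinv hstep => hinv.mvpStep hstep) h

end MVPProcess

section Subgraphs

variable {p : Fin n → Fin n} {π : Equiv.Perm (Fin n)} {S : Finset (Fin n × Fin n)} {i j : Fin n}

lemma mem_invFinset : (j, i) ∈ invFinset π ↔ j < i ∧ π i < π j := by
  simp [invFinset]

lemma mem_pfToSub : (j, i) ∈ pfToSub π p ↔ (j, i) ∈ invFinset π ∧ p (π i) = j := by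
  simp [pfToSub]

lemma MVPOutcome.eq_or_mem_invFinset (h : MVPOutcome p π) (i : Fin n) :
    p (π i) = i ∨ (p (π i), i) ∈ invFinset π := by
  obtain ⟨occ, hrun, hocc⟩ := h
  have hinv := mvpInvariant_of_mvpRun_eq_some hrun
  obtain ⟨c, hc, hpc⟩ := hinv.exists_le_occupant (hocc i)
  obtain rfl : π (p (π i)) = c := Option.some.inj ((hocc _).symm.trans hpc)
  refine or_iff_not_imp_left.mpr fun hne => mem_invFinset.mpr ⟨?_, ?_⟩
  · exact lt_of_le_of_ne (hinv.pref_le (hocc i)) hne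
  · exact lt_of_le_of_ne hc fun heq => hne (π.injective heq).symm

lemma subToPF_apply_mem (h : ∃ j, (j, i) ∈ S) : (subToPF π S (π i), i) ∈ S := by
  have h' : ∃ j, (j, π.symm (π i)) ∈ S := by rwa [π.symm_apply_apply]
  rw [subToPF, dif_pos h']
  simpa only [π.symm_apply_apply] using h'.choose_spec

lemma subToPF_apply_of_forall_notMem (h : ∀ j, (j, i) ∉ S) : subToPF π S (π i) = i := by
  simp [subToPF, h]

lemma IsOneSubgraph.subToPF_apply (hS : IsOneSubgraph π S) (h : (j, i) ∈ S) :
    subToPF π S (π i) = j :=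
  hS.2 i _ _ (subToPF_apply_mem ⟨j, h⟩) h

lemma subToPF_apply_le (hS : S ⊆ invFinset π) (i : Fin n) : subToPF π S (π i) ≤ i := by
  by_cases h : ∃ j, (j, i) ∈ S
  · exact (mem_invFinset.mp (hS (subToPF_apply_mem h))).1.le
  · exact (subToPF_apply_of_forall_notMem (not_exists.mp h)).le

lemma isParkingFunction_of_apply_perm_le (h : ∀ i, p (π i) ≤ i) : IsParkingFunction p := by
  intro k
  have hsub : (Iic k).map π.toEmbedding ⊆ univ.filter fun c => p c ≤ k := by
    intro c hc
    obtain ⟨i, hi, rfl⟩ := mem_map.mp hc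
    exact mem_filter.mpr ⟨mem_univ _, (h i).trans (mem_Iic.mp hi)⟩
  simpa only [card_map, Fin.card_Iic] using card_le_card hsub

lemma IsOneSubgraph.pfToSub_subToPF (hS : IsOneSubgraph π S) : pfToSub π (subToPF π S) = S := by
  ext ⟨j, i⟩
  rw [mem_pfToSub]
  constructor
  · rintro ⟨hinv, rfl⟩
    refine subToPF_apply_mem ?_
    by_contra! hnone
    exact (mem_invFinset.mp hinv).1.ne (subToPF_apply_of_forall_notMem hnone)
  · exact fun h => ⟨hS.1 h, hS.subToPF_apply h⟩

lemma subToPF_pfToSub (h : ∀ i, p (π i) = i ∨ (p (π i), i) ∈ invFinset π) :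
    subToPF π (pfToSub π p) = p := by
  funext c
  obtain ⟨i, rfl⟩ := π.surjective c
  by_cases harc : ∃ j, (j, i) ∈ pfToSub π p
  · exact (mem_pfToSub.mp (subToPF_apply_mem harc)).2.symm
  · rw [not_exists] at harc
    have hfix : p (π i) = i := (h i).resolve_right fun hinv => harc _ (mem_pfToSub.mpr ⟨hinv, rfl⟩)
    rw [subToPF_apply_of_forall_notMem harc, hfix]

end Subgraphs

/-- (i) `Ψ_{Sub→PF}` sends 1-subgraphs to parking functions and is
injective; (ii) `Ψ_{Sub→PF} ∘ Ψ_{PF→Sub} = id` on the fibre `Fib_n(π)`, and in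
particular `Ψ_{PF→Sub}` is injective on the fibre. -/
theorem statement1 (n : ℕ) (π : Equiv.Perm (Fin n)) :
    (∀ S : Finset (Fin n × Fin n), IsOneSubgraph π S →
      IsParkingFunction (subToPF π S)) ∧
    (∀ S S' : Finset (Fin n × Fin n), IsOneSubgraph π S → IsOneSubgraph π S' →
      subToPF π S = subToPF π S' → S = S') ∧
    (∀ p ∈ FibMVP π, subToPF π (pfToSub π p) = p) ∧
    (∀ p ∈ FibMVP π, ∀ p' ∈ FibMVP π, pfToSub π p = pfToSub π p' → p = p') := by
  have hinverse : Set.LeftInvOn (subToPF π) (pfToSub π) (FibMVP π) :=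
    fun _ hp => subToPF_pfToSub hp.2.eq_or_mem_invFinset
  refine ⟨?_, ?_, hinverse, ?_⟩
  · exact fun S hS => isParkingFunction_of_apply_perm_le (subToPF_apply_le hS.1)
  · intro S S' hS hS' h
    rw [← hS.pfToSub_subToPF, h, hS'.pfToSub_subToPF]
  · exact fun _ hp _ hp' h => hinverse.injOn hp hp' h

end MVPPaper
end

section
/- Let p be a parking preference of length n that is a parking function. Then every spot is preferred by at most two cars (i.e., |{i : p_i = j}| ≤ 2 for all j ∈ {1,…,n}) if and only if the associated lattice path Φ(p) is a Motzkin path. -/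
/- Common definitions: the classical and MVP parking processes, parking
functions, inversion graphs and 1-subgraphs, Motzkin paths, and sandpile
configurations on complete graphs. Spots, cars and vertices are 0-indexed
(element `i : Fin n` corresponds to the 1-indexed `i+1` of the paper). -/

namespace MVPPaper

open Finset

variable {n : ℕ}

/-! The path `Φ(p)` takes the step `min (c_j - 1) 1`, where `c_j` is the number of cars preferring
spot `j`. The uncapped steps `c_j - 1` always sum to `0`, so the capped path returns to height `0`
exactly when no step is capped, i.e. when every `c_j ≤ 2`. In that case the height after spot `k`
is the number of cars preferring a spot up to `k`, minus the number of these spots, and being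
nonnegative at every `k` is the parking function condition. -/

theorem stepVal_Phi (p : Fin n → Fin n) (j : Fin n) :
    stepVal (Phi p j) = min ((prefCount p j : ℤ) - 1) 1 := by
  unfold Phi
  split_ifs <;> simp only [stepVal] <;> omega

theorem stepVal_Phi_eq_prefCount_sub_one_iff (p : Fin n → Fin n) (j : Fin n) :
    stepVal (Phi p j) = (prefCount p j : ℤ) - 1 ↔ prefCount p j ≤ 2 := by
  rw [stepVal_Phi, min_eq_left_iff]
  omega

theorem sum_prefCount_sub_one (p : Fin n → Fin n) (s : Finset (Fin n)) :
    ∑ j ∈ s, ((prefCount p j : ℤ) - 1) = #{i | p i ∈ s} - #s := by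
  simp only [prefCount, sum_sub_distrib, ← Nat.cast_sum, sum_card_fiberwise_eq_card_filter,
    sum_const, nsmul_one]

theorem sum_univ_prefCount_sub_one (p : Fin n → Fin n) :
    ∑ j, ((prefCount p j : ℤ) - 1) = 0 := by
  rw [sum_prefCount_sub_one]
  simp

theorem isParkingFunction_iff_sum_prefCount_sub_one_nonneg (p : Fin n → Fin n) :
    IsParkingFunction p ↔
      ∀ k : Fin n, 0 ≤ ∑ j ∈ univ.filter (fun j : Fin n => j ≤ k), ((prefCount p j : ℤ) - 1) := by
  refine forall_congr' fun k => ?_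
  have card_spots_le : #{j : Fin n | j ≤ k} = (k : ℕ) + 1 := by
    rw [filter_ge_eq_Iic, Fin.card_Iic]
  simp only [sum_prefCount_sub_one, mem_filter_univ, card_spots_le]
  omega

theorem sum_stepVal_Phi_eq_zero_iff (p : Fin n → Fin n) :
    ∑ j, stepVal (Phi p j) = 0 ↔ ∀ j, prefCount p j ≤ 2 := by
  have stepVal_le : ∀ j ∈ univ, stepVal (Phi p j) ≤ (prefCount p j : ℤ) - 1 := fun j _ =>
    (stepVal_Phi p j).trans_le (min_le_left _ _)
  rw [← sum_univ_prefCount_sub_one p, sum_eq_sum_iff_of_le stepVal_le]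
  simp only [mem_univ, forall_const, stepVal_Phi_eq_prefCount_sub_one_iff]

theorem statement8_general (p : Fin n → Fin n) :
    IsMotzkinPath (Phi p) ↔ IsParkingFunction p ∧ ∀ j, prefCount p j ≤ 2 := by
  rw [IsMotzkinPath, sum_stepVal_Phi_eq_zero_iff, and_comm, and_congr_left_iff]
  intro prefCount_le_two
  have stepVal_eq (j : Fin n) : stepVal (Phi p j) = (prefCount p j : ℤ) - 1 :=
    (stepVal_Phi_eq_prefCount_sub_one_iff p j).2 (prefCount_le_two j)
  simp only [stepVal_eq, isParkingFunction_iff_sum_prefCount_sub_one_nonneg]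

/-- a parking function `p` has every spot preferred by at most two
cars iff `Φ(p)` is a Motzkin path. -/
theorem statement8 (n : ℕ) (p : Fin n → Fin n) (hp : IsParkingFunction p) :
    (∀ j, prefCount p j ≤ 2) ↔ IsMotzkinPath (Phi p) := by
  rw [statement8_general, and_iff_right hp]

end MVPPaper
end

section
/- For every Motzkin parking function p of length n, there exists a unique rearrangement p' of p (same multiset of entries) such that O_MVP(p') is the decreasing permutation dec_n = n(n−1)⋯1. In particular, Φ restricted to the fibre Fib_n(dec_n) is a bijection onto the set Motz_n of Motzkin paths of length n. -/
/- Common definitions: the classical and MVP parking processes, parking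
functions, inversion graphs and 1-subgraphs, Motzkin paths, and sandpile
configurations on complete graphs. Spots, cars and vertices are 0-indexed
(element `i : Fin n` corresponds to the 1-indexed `i+1` of the paper). -/

namespace MVPPaper

open Finset

variable {n : ℕ}

/-! A car is named by the spot `y` in which it should end up, so `decPerm n` lets the cars enter in
decreasing order of their names; let `q y` be the preference of the car `y`. The outcome is
`decPerm n` exactly when the arcs from `q y` to `y`, for `q y < y`, form a non-crossing matching.
This is seen by following the map which sends each car to its current spot, or to its preference
if it has not entered yet: it starts as `q`, it ends as the identity when the outcome is
`decPerm n`, and the entrance of the car `r` either leaves it unchanged or, when `r` is the left end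
of an arc, deletes that arc by bumping the car at its right end to its own spot.

Under `Φ` the left ends of a non-crossing matching are the up steps and the right ends are the down
steps, which determine the matching. Conversely, the arcs joining each down step of a Motzkin path
to the last earlier step starting at a lower height form such a matching. Finally, the parking
condition says that `Φ` stays nonnegative, and `Φ` determines a Motzkin parking function up to
rearrangement. -/

section NonCrossing

variable {α : Type*} [LinearOrder α] {q q' : α → α} {s s' j : α}

/-- A non-crossing matching of `α`, encoded as the map `q` sending the right end of each arc to its
left end and every other vertex to itself. The single condition `nested` says that arcs with
distinct right ends are disjoint or strictly nested. -/
structure IsNonCrossing (q : α → α) : Prop where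
  le : ∀ s, q s ≤ s
  nested : ∀ ⦃s s'⦄, q s < s → s < s' → q s' ≤ s → q s' < q s

namespace IsNonCrossing

theorem map_eq_self (hq : IsNonCrossing q) (s : α) : q (q s) = q s := by
  by_contra hne
  have hlt : q (q s) < q s := lt_of_le_of_ne (hq.le _) hne
  have hs : q s < s := lt_of_le_of_ne (hq.le s) fun h => hne (by rw [h, h])
  exact (hq.nested hlt hs le_rfl).not_gt hlt

theorem eq_of_map_eq (hq : IsNonCrossing q) (hs : q s < s) (hs' : q s' < s') (h : q s = q s') :
    s = s' := by
  rcases lt_trichotomy s s' with hlt | heq | hgt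
  · exact absurd h.symm (hq.nested hs hlt (h ▸ hs.le)).ne
  · exact heq
  · exact absurd h (hq.nested hs' hgt (h ▸ hs'.le)).ne

theorem not_map_lt_map (hq : IsNonCrossing q) (hq' : IsNonCrossing q')
    (hleft : ∀ x, (∃ y, x < y ∧ q' y = x) → ∃ y, x < y ∧ q y = x)
    (hbelow : ∀ y < s, q y = q' y) (hs' : q' s < s) : ¬q s < q' s := by
  intro hlt
  obtain ⟨y, hy, hqy⟩ := hleft (q' s) ⟨s, hs', rfl⟩
  rcases lt_trichotomy y s with hys | rfl | hsy
  · have hq'y : q' y = q' s := (hbelow y hys).symm.trans hqy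
    exact hys.ne (hq'.eq_of_map_eq (hq'y ▸ hy) hs' hq'y)
  · exact hlt.ne hqy
  · have hnest : q y < q s := hq.nested (hlt.trans hs') hsy (hqy ▸ hs'.le)
    exact (hqy ▸ hnest).not_gt hlt

theorem ext_of_ends [WellFoundedLT α] (hq : IsNonCrossing q) (hq' : IsNonCrossing q')
    (hright : ∀ s, q s < s ↔ q' s < s)
    (hleft : ∀ x, (∃ y, x < y ∧ q y = x) ↔ ∃ y, x < y ∧ q' y = x) : q = q' := by
  funext s
  induction s using WellFoundedLT.induction with
  | ind s hbelow =>
    rcases (hq.le s).eq_or_lt with heq | hlt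
    · have hnot : ¬q' s < s := fun h => ((hright s).2 h).ne heq
      exact heq.trans ((hq'.le s).eq_of_not_lt hnot).symm
    · have hlt' := (hright s).1 hlt
      have hnot : ¬q s < q' s := hq.not_map_lt_map hq' (fun x => (hleft x).2) hbelow hlt'
      have hnot' : ¬q' s < q s :=
        hq'.not_map_lt_map hq (fun x => (hleft x).1) (fun y hy => (hbelow y hy).symm) hlt
      exact le_antisymm (not_lt.1 hnot') (not_lt.1 hnot)

theorem update (hq : IsNonCrossing q) {i : α} (hij : i ≤ j)
    (hbetween : ∀ s, i ≤ s → s < j → q s = s) (hright : ∀ s, j < s → q s ≤ j → q s < i) :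
    IsNonCrossing (Function.update q j i) := by
  refine ⟨fun s => ?_, fun s s' hs hss' hs' => ?_⟩
  · rcases eq_or_ne s j with rfl | hsj
    · simpa using hij
    · simpa [hsj] using hq.le s
  · rcases eq_or_ne s j with rfl | hsj
    · rw [Function.update_of_ne hss'.ne'] at hs' ⊢
      rw [Function.update_self]
      exact hright s' hss' hs'
    · rw [Function.update_of_ne hsj] at hs ⊢
      rcases eq_or_ne s' j with rfl | hsj'
      · rw [Function.update_self] at hs'
        exact absurd (hbetween s hs' hss') hs.ne
      · rw [Function.update_of_ne hsj'] at hs' ⊢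
        exact hq.nested hs hss' hs'

end IsNonCrossing

end NonCrossing

section Phi

theorem phi_eq_D_iff (p : Fin n → Fin n) (j : Fin n) :
    Phi p j = MStep.D ↔ prefCount p j = 0 := by
  grind [Phi]

theorem phi_eq_U_iff (p : Fin n → Fin n) (j : Fin n) :
    Phi p j = MStep.U ↔ 2 ≤ prefCount p j := by
  grind [Phi]

theorem stepVal_phi {p : Fin n → Fin n} {j : Fin n} (hp : prefCount p j ≤ 2) :
    stepVal (Phi p j) = (prefCount p j : ℤ) - 1 := by
  grind [Phi, stepVal]

theorem stepVal_injective : Function.Injective stepVal := by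
  rintro (_ | _ | _) (_ | _ | _) <;> simp [stepVal]

theorem sum_stepVal_phi {p : Fin n → Fin n} (hp : ∀ j, prefCount p j ≤ 2) (A : Finset (Fin n)) :
    ∑ j ∈ A, stepVal (Phi p j) = (#{i | p i ∈ A} : ℤ) - #A := by
  simp only [stepVal_phi (hp _), sum_sub_distrib, prefCount, ← Nat.cast_sum,
    sum_card_fiberwise_eq_card_filter, sum_const, nsmul_eq_mul, mul_one]

theorem sum_stepVal_phi_univ {p : Fin n → Fin n} (hp : ∀ j, prefCount p j ≤ 2) :
    ∑ j, stepVal (Phi p j) = 0 := by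
  simp [sum_stepVal_phi hp]

theorem isMotzkinPath_phi_iff {p : Fin n → Fin n} (hp : ∀ j, prefCount p j ≤ 2) :
    IsMotzkinPath (Phi p) ↔ IsParkingFunction p := by
  have hprefix (k : Fin n) :
      ∑ j with j ≤ k, stepVal (Phi p j) = (#{i | p i ≤ k} : ℤ) - (k + 1) := by
    have hcard : #{j | j ≤ k} = (k : ℕ) + 1 := by
      rw [filter_ge_eq_Iic, Fin.card_Iic]
    rw [sum_stepVal_phi hp, hcard]
    simp
  simp only [IsMotzkinPath, IsParkingFunction, sum_stepVal_phi_univ hp, hprefix, true_and]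
  exact forall_congr' fun k => by omega

theorem prefCount_comp_perm (p : Fin n → Fin n) (σ : Equiv.Perm (Fin n)) :
    prefCount (p ∘ σ) = prefCount p := by
  funext j
  exact card_equiv σ (by simp)

theorem phi_comp_perm (p : Fin n → Fin n) (σ : Equiv.Perm (Fin n)) : Phi (p ∘ σ) = Phi p := by
  funext j
  simp only [Phi, prefCount_comp_perm]

theorem exists_perm_of_prefCount_eq {p p' : Fin n → Fin n} (h : prefCount p' = prefCount p) :
    ∃ σ : Equiv.Perm (Fin n), p' = p ∘ σ := by
  have hfib (j : Fin n) : Nonempty ({i // p' i = j} ≃ {i // p i = j}) :=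
    ⟨Fintype.equivOfCardEq (by simpa only [Fintype.card_subtype, prefCount] using congrFun h j)⟩
  refine ⟨Equiv.ofFiberEquiv fun j => (hfib j).some, funext fun i => ?_⟩
  exact (Equiv.ofFiberEquiv_map _ i).symm

namespace IsNonCrossing

variable {q q' : Fin n → Fin n}

theorem prefCount_eq_zero_iff (hq : IsNonCrossing q) (j : Fin n) :
    prefCount q j = 0 ↔ q j < j := by
  rw [prefCount, card_eq_zero, filter_eq_empty_iff]
  refine ⟨fun h => lt_of_le_of_ne (hq.le j) (h (mem_univ j)), ?_⟩
  rintro hj s - rfl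
  exact hj.ne (hq.map_eq_self s)

theorem two_le_prefCount_iff (hq : IsNonCrossing q) (j : Fin n) :
    2 ≤ prefCount q j ↔ ∃ y, j < y ∧ q y = j := by
  rw [prefCount, Nat.succ_le_iff, one_lt_card]
  simp only [mem_filter_univ]
  constructor
  · rintro ⟨a, rfl, b, hb, hne⟩
    rcases (hq.le a).eq_or_lt with ha | ha
    · exact ⟨b, lt_of_le_of_ne (hb ▸ hq.le b) (by rwa [ha]), hb⟩
    · exact ⟨a, ha, rfl⟩
  · rintro ⟨y, hy, rfl⟩
    exact ⟨q y, hq.map_eq_self y, y, rfl, hy.ne⟩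

theorem prefCount_le_two (hq : IsNonCrossing q) (j : Fin n) : prefCount q j ≤ 2 := by
  have hright {s : Fin n} (hs : s ∈ ({s | q s = j} : Finset (Fin n)).erase j) :
      q s = j ∧ q s < s := by
    obtain ⟨hne, hs⟩ := mem_erase.1 hs
    have hqs : q s = j := (mem_filter_univ s).1 hs
    exact ⟨hqs, lt_of_le_of_ne (hq.le s) (hqs.trans_ne hne.symm)⟩
  have hcard : #(({s | q s = j} : Finset (Fin n)).erase j) ≤ 1 :=
    card_le_one.2 fun a ha b hb =>
      hq.eq_of_map_eq (hright ha).2 (hright hb).2 ((hright ha).1.trans (hright hb).1.symm)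
  have hpred := pred_card_le_card_erase (s := ({s | q s = j} : Finset (Fin n))) (a := j)
  rw [prefCount]
  omega

theorem phi_eq_D_iff (hq : IsNonCrossing q) (j : Fin n) : Phi q j = MStep.D ↔ q j < j :=
  (MVPPaper.phi_eq_D_iff q j).trans (hq.prefCount_eq_zero_iff j)

theorem phi_eq_U_iff (hq : IsNonCrossing q) (j : Fin n) :
    Phi q j = MStep.U ↔ ∃ y, j < y ∧ q y = j :=
  (MVPPaper.phi_eq_U_iff q j).trans (hq.two_le_prefCount_iff j)

theorem eq_of_phi_eq (hq : IsNonCrossing q) (hq' : IsNonCrossing q') (h : Phi q = Phi q') :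
    q = q' :=
  hq.ext_of_ends hq' (fun s => by rw [← hq.phi_eq_D_iff, ← hq'.phi_eq_D_iff, h])
    (fun x => by rw [← hq.phi_eq_U_iff, ← hq'.phi_eq_U_iff, h])

end IsNonCrossing

end Phi

section Matching

/-- The height of the path `φ` before its step `k` (so after `k` steps). -/
def height (φ : Fin n → MStep) (k : ℕ) : ℤ :=
  ∑ j ∈ univ.filter (fun j : Fin n => (j : ℕ) < k), stepVal (φ j)

variable {φ : Fin n → MStep}

theorem height_succ (φ : Fin n → MStep) (k : Fin n) :
    height φ (k + 1) = height φ k + stepVal (φ k) := by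
  have hinsert : univ.filter (fun j : Fin n => (j : ℕ) < k + 1) =
      insert k (univ.filter fun j : Fin n => (j : ℕ) < k) := by
    ext j
    simp only [mem_filter_univ, mem_insert, Fin.ext_iff]
    omega
  rw [height, hinsert, sum_insert (by simp), add_comm, height]

theorem IsMotzkinPath.height_succ_nonneg (hφ : IsMotzkinPath φ) (k : Fin n) :
    0 ≤ height φ (k + 1) := by
  simpa only [height, Nat.lt_succ_iff, Fin.val_fin_le] using hφ.2 k

/-- The down step `j` of the path `φ` matches the step `i`: among the times before `j`, `i` is the
last one at which the path is lower than it is just before `j`. -/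
def IsMatch (φ : Fin n → MStep) (i j : Fin n) : Prop :=
  i < j ∧ height φ i < height φ j ∧ ∀ y : ℕ, (i : ℕ) < y → y ≤ j → height φ j ≤ height φ y

theorem IsMotzkinPath.exists_isMatch (hφ : IsMotzkinPath φ) {j : Fin n} (hj : φ j = MStep.D) :
    ∃ i, IsMatch φ i j := by
  have hpos : height φ 0 < height φ j := by
    have hnonneg := hφ.height_succ_nonneg j
    have hzero : height φ 0 = 0 := by simp [height]
    rw [height_succ, hj, stepVal] at hnonneg
    omega
  have hlow : height φ (Nat.findGreatest (fun k => height φ k < height φ j) j) < height φ j :=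
    Nat.findGreatest_spec (P := fun k => height φ k < height φ j) (Nat.zero_le j) hpos
  have hlt : Nat.findGreatest (fun k => height φ k < height φ j) j < j :=
    lt_of_le_of_ne (Nat.findGreatest_le _) fun h => by simp [h] at hlow
  exact ⟨⟨_, hlt.trans j.2⟩, hlt, hlow,
    fun y hy hyj => not_lt.1 (Nat.findGreatest_is_greatest hy hyj)⟩

namespace IsMatch

variable {i j : Fin n}

theorem eq_U (h : IsMatch φ i j) : φ i = MStep.U := by
  have hstep := height_succ φ i
  have hle := h.2.2 (i + 1) (Nat.lt_succ_self i) h.1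
  have hlow := h.2.1
  cases hi : φ i <;> simp only [hi, stepVal] at hstep <;> first | rfl | omega

theorem height_sub_one_le (h : IsMatch φ i j) {y : ℕ} (hiy : i ≤ y) (hyj : y ≤ j) :
    height φ j - 1 ≤ height φ y := by
  rcases hiy.eq_or_lt with rfl | hiy
  · have hstep := height_succ φ i
    have hle := h.2.2 (i + 1) (Nat.lt_succ_self i) h.1
    simp only [h.eq_U, stepVal] at hstep
    omega
  · have hle := h.2.2 y hiy hyj
    omega

theorem nested (h : IsMatch φ i j) (hj : φ j = MStep.D) {i' j' : Fin n} (h' : IsMatch φ i' j')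
    (hjj' : j < j') (hi'j : i' ≤ j) : i' < i := by
  by_contra! hii'
  have hlow := h.height_sub_one_le hii' hi'j
  have hle := h'.2.2 (j + 1) (Nat.lt_succ_of_le hi'j) hjj'
  have hlow' := h'.2.1
  rw [height_succ, hj, stepVal] at hle
  omega

end IsMatch

theorem IsMotzkinPath.exists_isNonCrossing_ends (hφ : IsMotzkinPath φ) :
    ∃ q : Fin n → Fin n, IsNonCrossing q ∧ (∀ s, q s < s ↔ φ s = MStep.D) ∧
      ∀ s, q s < s → φ (q s) = MStep.U := by
  classical
  choose! m hm using fun j hj => hφ.exists_isMatch (j := j) hj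
  have hlt (s : Fin n) : (if φ s = MStep.D then m s else s) < s ↔ φ s = MStep.D := by
    split_ifs with hs
    · exact iff_of_true (hm s hs).1 hs
    · exact iff_of_false (lt_irrefl s) hs
  refine ⟨fun s => if φ s = MStep.D then m s else s, ⟨fun s => ?_, fun s s' hs hss' hs' => ?_⟩,
    hlt, fun s hs => ?_⟩
  · split_ifs with hs
    · exact (hm s hs).1.le
    · exact le_rfl
  · have hD := (hlt s).1 hs
    have hD' := (hlt s').1 (hs'.trans_lt hss')
    simp only [hD, hD', if_true] at hs' ⊢
    exact (hm s hD).nested hD (hm s' hD') hss' hs'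
  · have hD := (hlt s).1 hs
    simpa only [hD, if_true] using (hm s hD).eq_U

theorem IsMotzkinPath.exists_isNonCrossing_phi_eq (hφ : IsMotzkinPath φ) :
    ∃ q : Fin n → Fin n, IsNonCrossing q ∧ Phi q = φ := by
  obtain ⟨q, hq, hD, hU⟩ := hφ.exists_isNonCrossing_ends
  have hle (s : Fin n) : stepVal (Phi q s) ≤ stepVal (φ s) := by
    have hDs : Phi q s = MStep.D ↔ φ s = MStep.D := (hq.phi_eq_D_iff s).trans (hD s)
    have hUs : Phi q s = MStep.U → φ s = MStep.U := fun h => by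
      obtain ⟨y, hy, rfl⟩ := (hq.phi_eq_U_iff s).1 h
      exact hU y hy
    cases hPhi : Phi q s <;> cases hs : φ s <;> simp_all [stepVal]
  -- Both paths end at height `0`, so every up step of `φ` is the left end of an arc.
  have hsum : ∑ s, stepVal (Phi q s) = ∑ s, stepVal (φ s) :=
    (sum_stepVal_phi_univ hq.prefCount_le_two).trans hφ.1.symm
  refine ⟨q, hq, funext fun s => stepVal_injective ?_⟩
  exact (sum_eq_sum_iff_of_le fun s _ => hle s).1 hsum s (mem_univ s)

end Matching

section Parking

variable {occ occ' : Fin n → Option (Fin n)} {i v k : Fin n}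

theorem firstFree_eq_some_iff :
    firstFree occ v = some k ↔ IsLeast {k | v ≤ k ∧ occ k = none} k := by
  simp only [firstFree, ← Fin.find?_eq_find?_finRange, Fin.find?_eq_some_iff, IsLeast,
    mem_lowerBounds, Set.mem_ofPred_eq, Bool.eq_false_iff, ne_eq, Bool.and_eq_true,
    decide_eq_true_eq, Option.isNone_iff_eq_none, and_assoc]
  grind

theorem mvpStep_eq_some_iff :
    mvpStep occ i v = some occ' ↔
      occ v = none ∧ occ' = Function.update occ v (some i) ∨
      ∃ j k, occ v = some j ∧ IsLeast {k | v < k ∧ occ k = none} k ∧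
        occ' = Function.update (Function.update occ v (some i)) k (some j) := by
  have hfree : {k | v ≤ k ∧ Function.update occ v (some i) k = none} =
      {k | v < k ∧ occ k = none} := by
    ext k
    rcases eq_or_ne k v with rfl | hk
    · simp
    · simp [hk, hk.symm.le_iff_lt]
  cases hv : occ v with
  | none => simp [mvpStep, hv, eq_comm]
  | some j =>
    simp [mvpStep, hv, firstFree_eq_some_iff, hfree, eq_comm (a := occ')]

/-- `IsPositionMap π occ A pos` says that the cars parked in the occupancy `occ` are those with
target spots in `A`, the car with target spot `y` being in spot `pos y`. The target spot of a car
is the one it occupies in the outcome `π`, so that `y` is the target spot of the car `π y`. -/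
def IsPositionMap (π : Equiv.Perm (Fin n)) (occ : Fin n → Option (Fin n)) (A : Set (Fin n))
    (pos : Fin n → Fin n) : Prop :=
  ∀ x y, occ x = some (π y) ↔ y ∈ A ∧ pos y = x

/-- One entry of the MVP process, for cars named by their target spots: the cars in `A` are parked
in their spots `pos y`, the car `r` enters with preference `pos r`, and `pos'` is the resulting
position map. It differs from `pos` only in the spot of the bumped car, if there is one, because
`pos` already records the preference of the entering car. -/
def MVPMove (A : Set (Fin n)) (r : Fin n) (pos pos' : Fin n → Fin n) : Prop :=
  (∀ y ∈ A, pos y ≠ pos r) ∧ pos' = pos ∨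
    ∃ j ∈ A, ∃ k, pos j = pos r ∧ IsLeast {k | pos r < k ∧ ∀ y ∈ A, pos y ≠ k} k ∧
      pos' = Function.update pos j k

namespace IsPositionMap

variable {π : Equiv.Perm (Fin n)} {A : Set (Fin n)} {pos pos' : Fin n → Fin n} {r : Fin n}

theorem eq_none_iff (h : IsPositionMap π occ A pos) (x : Fin n) :
    occ x = none ↔ ∀ y ∈ A, pos y ≠ x := by
  rw [Option.eq_none_iff_forall_ne_some, π.surjective.forall]
  exact forall_congr' fun y => by rw [Ne, h x y, not_and]

theorem park (h : IsPositionMap π occ A pos) (hr : r ∉ A) :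
    IsPositionMap π (Function.update occ v (some (π r))) (insert r {y ∈ A | pos y ≠ v})
      (Function.update pos r v) := by
  intro x y
  have hxy := h x y
  rcases eq_or_ne x v with rfl | hx <;> rcases eq_or_ne y r with rfl | hy
  · simp
  · simp [hy, hy.symm, and_assoc]
  · simp [hx, hx.symm, hxy, hr]
  · rw [Function.update_of_ne hx, Function.update_of_ne hy, hxy]
    aesop

theorem injOn (h : IsPositionMap π occ A pos) : Set.InjOn pos A := by
  intro y hy y' hy' heq
  have hy := (h (pos y) y).2 ⟨hy, rfl⟩
  have hy' := (h (pos y) y').2 ⟨hy', heq.symm⟩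
  exact π.injective (Option.some_injective _ (hy.symm.trans hy'))

theorem eqOn (h : IsPositionMap π occ A pos) (h' : IsPositionMap π occ A pos') :
    Set.EqOn pos pos' A := fun y hy =>
  ((h' (pos y) y).1 ((h (pos y) y).2 ⟨hy, rfl⟩)).2.symm

theorem park_of_forall_ne (h : IsPositionMap π occ A pos) (hr : r ∉ A)
    (hfree : ∀ y ∈ A, pos y ≠ pos r) :
    IsPositionMap π (Function.update occ (pos r) (some (π r))) (insert r A) pos := by
  simpa only [Function.update_eq_self, Set.sep_eq_self_iff_mem_true.2 hfree]
    using h.park (v := pos r) hr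

theorem park_bump (h : IsPositionMap π occ A pos) (hr : r ∉ A) {j : Fin n} (hj : j ∈ A)
    (hjr : pos j = pos r) (hrk : pos r ≠ k) (hk : ∀ y ∈ A, pos y ≠ k) :
    IsPositionMap π
      (Function.update (Function.update occ (pos r) (some (π r))) k (some (π j)))
      (insert r A) (Function.update pos j k) := by
  have hpark := h.park (v := pos r) hr
  rw [Function.update_eq_self] at hpark
  have hjA : j ∉ insert r {y ∈ A | pos y ≠ pos r} := by
    rintro (rfl | hj')
    · exact hr hj
    · exact hj'.2 hjr
  convert hpark.park (v := k) hjA using 1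
  ext y
  have hinj : y ∈ A → pos y = pos r → y = j := fun hy hyr => h.injOn hy hj (hyr.trans hjr.symm)
  grind

theorem mvpStep_eq_some_iff (h : IsPositionMap π occ A pos) :
    mvpStep occ (π r) (pos r) = some occ' ↔
      (∀ y ∈ A, pos y ≠ pos r) ∧ occ' = Function.update occ (pos r) (some (π r)) ∨
      ∃ j ∈ A, ∃ k, pos j = pos r ∧ IsLeast {k | pos r < k ∧ ∀ y ∈ A, pos y ≠ k} k ∧
        occ' = Function.update (Function.update occ (pos r) (some (π r))) k (some (π j)) := by
  rw [MVPPaper.mvpStep_eq_some_iff, π.surjective.exists]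
  simp only [h.eq_none_iff, h (pos r), and_assoc, exists_and_left]

theorem exists_mvpMove (h : IsPositionMap π occ A pos) (hr : r ∉ A)
    (hstep : mvpStep occ (π r) (pos r) = some occ') :
    ∃ pos', MVPMove A r pos pos' ∧ IsPositionMap π occ' (insert r A) pos' := by
  rcases h.mvpStep_eq_some_iff.1 hstep with ⟨hfree, rfl⟩ | ⟨j, hj, k, hjr, hk, rfl⟩
  · exact ⟨pos, .inl ⟨hfree, rfl⟩, h.park_of_forall_ne hr hfree⟩
  · exact ⟨_, .inr ⟨j, hj, k, hjr, hk, rfl⟩, h.park_bump hr hj hjr hk.1.1.ne hk.1.2⟩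

theorem exists_mvpStep (h : IsPositionMap π occ A pos) (hr : r ∉ A) (hmove : MVPMove A r pos pos') :
    ∃ occ', mvpStep occ (π r) (pos r) = some occ' ∧ IsPositionMap π occ' (insert r A) pos' := by
  rcases hmove with ⟨hfree, rfl⟩ | ⟨j, hj, k, hjr, hk, rfl⟩
  · exact ⟨_, h.mvpStep_eq_some_iff.2 (.inl ⟨hfree, rfl⟩), h.park_of_forall_ne hr hfree⟩
  · exact ⟨_, h.mvpStep_eq_some_iff.2 (.inr ⟨j, hj, k, hjr, hk, rfl⟩),
      h.park_bump hr hj hjr hk.1.1.ne hk.1.2⟩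

end IsPositionMap

theorem MVPMove.apply_of_notMem {A : Set (Fin n)} {r y : Fin n} {pos pos' : Fin n → Fin n}
    (hmove : MVPMove A r pos pos') (hy : y ∉ A) : pos' y = pos y := by
  rcases hmove with ⟨-, rfl⟩ | ⟨j, hj, k, -, -, rfl⟩
  · rfl
  · exact Function.update_of_ne (ne_of_mem_of_not_mem hj hy).symm _ _

/-- The state of the MVP process for `p` once the cars with target spots `≥ m` have entered. In the
outcome `decPerm n` these are the first cars to enter, the car with target spot `n - 1` being the
very first. -/
def stateFrom (p : Fin n → Fin n) (m : ℕ) : Option (Fin n → Option (Fin n)) :=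
  ((List.finRange n).drop m).foldrM
    (fun r occ => mvpStep occ (decPerm n r) (p (decPerm n r))) (fun _ => none)

theorem stateFrom_zero (p : Fin n → Fin n) : stateFrom p 0 = mvpRun p := by
  rw [mvpRun, runProcess, ← List.reverse_reverse (List.finRange n), List.foldlM_reverse,
    List.finRange_reverse, List.foldrM_map]
  rfl

theorem stateFrom_self (p : Fin n → Fin n) : stateFrom p n = some fun _ => none := by
  rw [stateFrom, List.drop_of_length_le List.length_finRange.le]
  rfl

theorem stateFrom_val (p : Fin n → Fin n) (r : Fin n) :
    stateFrom p r = (stateFrom p (r + 1)).bind fun occ =>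
      mvpStep occ (decPerm n r) (p (decPerm n r)) := by
  rw [stateFrom, List.drop_eq_getElem_cons (by simp), List.foldrM_cons]
  simp [stateFrom]

/-- `IsStage p m pos` says that the MVP process for `p` succeeds until the cars with target spots
`≥ m` in the outcome `decPerm n` have entered, and that `pos` then maps the target spot of each of
these cars to its current spot, and that of every other car to its preference. -/
def IsStage (p : Fin n → Fin n) (m : ℕ) (pos : Fin n → Fin n) : Prop :=
  (∃ occ, stateFrom p m = some occ ∧ IsPositionMap (decPerm n) occ {y | m ≤ (y : ℕ)} pos) ∧
    ∀ y : Fin n, (y : ℕ) < m → pos y = p (decPerm n y)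

section Stage

variable {p pos pos' : Fin n → Fin n} {r : Fin n} {m : ℕ}

theorem insert_setOf_succ_le (r : Fin n) :
    insert r {y : Fin n | (r : ℕ) + 1 ≤ y} = {y : Fin n | (r : ℕ) ≤ y} :=
  Set.Ioi_insert (a := r)

theorem isStage_self (p : Fin n → Fin n) : IsStage p n (p ∘ decPerm n) :=
  ⟨⟨_, stateFrom_self p, by simp [IsPositionMap]⟩, fun _ _ => rfl⟩

theorem isStage_zero_id_iff : IsStage p 0 id ↔ MVPOutcome p (decPerm n) := by
  simp only [IsStage, stateFrom_zero, MVPOutcome, Nat.not_lt_zero, false_imp_iff, implies_true,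
    and_true]
  refine exists_congr fun occ => and_congr_right fun _ => ⟨fun h x => ?_, fun h x y => ?_⟩
  · exact (h x x).2 ⟨Nat.zero_le _, rfl⟩
  · simp [h x, eq_comm]

theorem IsStage.unique (h : IsStage p m pos) (h' : IsStage p m pos') : pos = pos' := by
  obtain ⟨⟨occ, hocc, hmap⟩, hpref⟩ := h
  obtain ⟨⟨occ', hocc', hmap'⟩, hpref'⟩ := h'
  obtain rfl : occ = occ' := Option.some_injective _ (hocc.symm.trans hocc')
  funext y
  rcases lt_or_ge (y : ℕ) m with hy | hy
  · rw [hpref y hy, hpref' y hy]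
  · exact hmap.eqOn hmap' hy

theorem IsStage.move (h : IsStage p (r + 1) pos) (hmove : MVPMove (Set.Ioi r) r pos pos') :
    IsStage p r pos' := by
  obtain ⟨⟨occ, hocc, hmap⟩, hpref⟩ := h
  obtain ⟨occ', hstep, hmap'⟩ := hmap.exists_mvpStep (lt_irrefl r) hmove
  rw [insert_setOf_succ_le] at hmap'
  rw [hpref r (Nat.lt_succ_self r)] at hstep
  refine ⟨⟨occ', by rw [stateFrom_val, hocc, Option.bind_some, hstep], hmap'⟩, fun y hy => ?_⟩
  rw [hmove.apply_of_notMem (y := y) (lt_asymm hy), hpref y (hy.trans (Nat.lt_succ_self r))]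

theorem IsStage.exists_mvpMove (h : IsStage p (r + 1) pos) (hr : (stateFrom p r).isSome) :
    ∃ pos', MVPMove (Set.Ioi r) r pos pos' ∧ IsStage p r pos' := by
  obtain ⟨⟨occ, hocc, hmap⟩, hpref⟩ := h
  obtain ⟨occ', hocc'⟩ := Option.isSome_iff_exists.1 hr
  have hstep : mvpStep occ (decPerm n r) (pos r) = some occ' := by
    rw [hpref r (Nat.lt_succ_self r), ← hocc', stateFrom_val, hocc, Option.bind_some]
  obtain ⟨pos', hmove, -⟩ := hmap.exists_mvpMove (lt_irrefl r) hstep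
  exact ⟨pos', hmove, IsStage.move ⟨⟨occ, hocc, hmap⟩, hpref⟩ hmove⟩

theorem exists_isStage (hm : m ≤ n) (hstate : (stateFrom p m).isSome) : ∃ pos, IsStage p m pos := by
  induction hm using Nat.decreasingInduction with
  | self => exact ⟨_, isStage_self p⟩
  | of_succ k hk ih =>
    have hsucc : (stateFrom p (k + 1)).isSome := by
      rw [stateFrom_val p ⟨k, hk⟩] at hstate
      exact Option.isSome_of_isSome_bind hstate
    obtain ⟨pos, hpos⟩ := ih hsucc
    obtain ⟨pos', -, hpos'⟩ := IsStage.exists_mvpMove (r := ⟨k, hk⟩) hpos hstate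
    exact ⟨pos', hpos'⟩

theorem IsStage.exists_prev (h : IsStage p r pos') :
    ∃ pos, IsStage p (r + 1) pos ∧ MVPMove (Set.Ioi r) r pos pos' := by
  obtain ⟨⟨occ', hocc', -⟩, -⟩ := id h
  have hstate : (stateFrom p r).isSome := hocc' ▸ rfl
  have hsucc : (stateFrom p (r + 1)).isSome := by
    rw [stateFrom_val] at hstate
    exact Option.isSome_of_isSome_bind hstate
  obtain ⟨pos, hpos⟩ := exists_isStage r.2 hsucc
  obtain ⟨pos'', hmove, hpos''⟩ := hpos.exists_mvpMove hstate
  exact ⟨pos, hpos, h.unique hpos'' ▸ hmove⟩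

end Stage

/-- The invariant of the parking process with outcome `decPerm n`, once the cars with target spots
`≥ m` have entered: the position map is a non-crossing matching, and each parked car either is in
its target spot or waits in a spot `< m`, to be bumped later. -/
structure IsOnTrack (m : ℕ) (pos : Fin n → Fin n) : Prop where
  isNonCrossing : IsNonCrossing pos
  eq_or_lt : ∀ y : Fin n, m ≤ y → pos y = y ∨ (pos y : ℕ) < m

section OnTrack

variable {p q pos pos' : Fin n → Fin n} {r : Fin n} {m : ℕ}

theorem IsNonCrossing.isOnTrack (hq : IsNonCrossing q) : IsOnTrack n q :=
  ⟨hq, fun y hy => absurd y.2 hy.not_gt⟩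

theorem isOnTrack_zero_iff : IsOnTrack 0 pos ↔ pos = id := by
  refine ⟨fun h => funext fun y => (h.eq_or_lt y (Nat.zero_le y)).resolve_right (Nat.not_lt_zero _),
    ?_⟩
  rintro rfl
  exact ⟨⟨fun _ => le_rfl, fun _ _ hs => absurd hs (lt_irrefl _)⟩, fun _ _ => .inl rfl⟩

namespace IsOnTrack

theorem eq_or_le (h : IsOnTrack (r + 1) pos) {y : Fin n} (hy : r < y) : pos y = y ∨ pos y ≤ r :=
  (h.eq_or_lt y hy).imp_right Nat.le_of_lt_succ

theorem mvpMove_of_left_end (h : IsOnTrack (r + 1) pos) {j : Fin n} (hj : r < j)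
    (hjr : pos j = r) : MVPMove (Set.Ioi r) r pos (Function.update pos j j) := by
  have hr : pos r = r := hjr ▸ h.isNonCrossing.map_eq_self j
  refine .inr ⟨j, hj, j, hjr.trans hr.symm,
    ⟨⟨hr.symm ▸ hj, fun y hy hyj => ?_⟩, fun k hk => ?_⟩, rfl⟩
  · rcases h.eq_or_le hy with hyy | hyr
    · obtain rfl : y = j := hyy.symm.trans hyj
      exact hj.ne (hjr.symm.trans hyy)
    · exact (hyj ▸ hyr).not_gt hj
  · by_contra! hkj
    have hrk : r < k := hr ▸ hk.1
    have hkk : pos k < k := lt_of_le_of_ne (h.isNonCrossing.le k) (hk.2 k hrk)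
    have hnest := h.isNonCrossing.nested hkk hkj (hjr ▸ hrk.le)
    have hkr := (h.eq_or_le hrk).resolve_left hkk.ne
    exact (hjr ▸ hnest).not_ge hkr

theorem update_of_left_end (h : IsOnTrack (r + 1) pos) {j : Fin n} (hj : r < j)
    (hjr : pos j = r) : IsOnTrack r (Function.update pos j j) := by
  have hq := h.isNonCrossing
  refine ⟨hq.update le_rfl (fun s hjs hsj => absurd hsj hjs.not_gt) fun s hjs hsj => ?_,
    fun y hy => ?_⟩
  · have hsr := (h.eq_or_le (hj.trans hjs)).resolve_left (hsj.trans_lt hjs).ne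
    exact hsr.trans_lt hj
  · rcases eq_or_ne y j with rfl | hyj
    · exact .inl (Function.update_self _ _ _)
    rw [Function.update_of_ne hyj]
    rcases (Fin.le_def.2 hy).eq_or_lt with rfl | hry
    · exact .inl (hjr ▸ hq.map_eq_self j)
    · refine (h.eq_or_le hry).imp_right fun hyr => lt_of_le_of_ne hyr fun heq => hyj ?_
      have hyr : pos y = r := Fin.ext heq
      exact hq.eq_of_map_eq (hyr ▸ hry) (hjr ▸ hj) (hyr.trans hjr.symm)

theorem of_forall_ne (h : IsOnTrack (r + 1) pos) (hleft : ∀ j, r < j → pos j ≠ r) :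
    IsOnTrack r pos := by
  refine ⟨h.isNonCrossing, fun y hy => ?_⟩
  rcases (Fin.le_def.2 hy).eq_or_lt with rfl | hry
  · exact (h.isNonCrossing.le r).eq_or_lt
  · exact (h.eq_or_le hry).imp_right fun hyr => lt_of_le_of_ne hyr (Fin.val_ne_of_ne (hleft y hry))

theorem exists_mvpMove (h : IsOnTrack (r + 1) pos) :
    ∃ pos', MVPMove (Set.Ioi r) r pos pos' ∧ IsOnTrack r pos' := by
  by_cases! hleft : ∃ j, r < j ∧ pos j = r
  · obtain ⟨j, hj, hjr⟩ := hleft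
    exact ⟨_, h.mvpMove_of_left_end hj hjr, h.update_of_left_end hj hjr⟩
  · refine ⟨pos, .inl ⟨fun y hy hyr => ?_, rfl⟩, h.of_forall_ne hleft⟩
    have hq := h.isNonCrossing
    rcases (hq.le r).eq_or_lt with heq | hlt
    · exact hleft y hy (hyr.trans heq)
    · exact hy.ne (hq.eq_of_map_eq hlt (hyr ▸ hlt.trans hy) hyr.symm)

theorem eq_of_update {j k : Fin n} (h : IsOnTrack r (Function.update pos j k)) (hj : r < j)
    (hjr : pos j = pos r) (hk : IsLeast {k | pos r < k ∧ ∀ y ∈ Set.Ioi r, pos y ≠ k} k) :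
    pos r = r ∧ k = j := by
  have hq := h.isNonCrossing
  have hrr : Function.update pos j k r = pos r := Function.update_of_ne hj.ne _ _
  have hjk : Function.update pos j k j = k := Function.update_self _ _ _
  have hkj : k = j ∨ k < r := by simpa only [hjk, Fin.val_fin_lt] using h.eq_or_lt j hj.le
  have hr : pos r = r := by
    by_contra hne
    have hlt : pos r < r := lt_of_le_of_ne (hrr ▸ hq.le r) hne
    have hfree (y : Fin n) (hy : r < y) : pos y ≠ r := by
      rcases eq_or_ne y j with rfl | hyj
      · exact hjr.trans_ne hne
      · have hyy := h.eq_or_lt y hy.le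
        rw [Function.update_of_ne hyj] at hyy
        intro hyr
        rcases hyy with hyy | hyy
        · exact hy.ne (hyr.symm.trans hyy)
        · exact hyy.ne (congrArg Fin.val hyr)
    have hkr : k ≤ r := hk.2 ⟨hlt, hfree⟩
    have hnest := hq.nested (s := r) (s' := j) (by rwa [hrr]) hj (by rwa [hjk])
    rw [hrr, hjk] at hnest
    exact hnest.not_gt hk.1.1
  exact ⟨hr, hkj.resolve_right fun hkr => (hr ▸ hk.1.1).not_gt hkr⟩

theorem of_update_self {j : Fin n} (h : IsOnTrack r (Function.update pos j j)) (hj : r < j)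
    (hr : pos r = r) (hjr : pos j = r)
    (hocc : ∀ s, r < s → s < j → ∃ y, r < y ∧ pos y = s) : IsOnTrack (r + 1) pos := by
  have hpos : Function.update (Function.update pos j j) j r = pos := by
    rw [Function.update_idem, ← hjr, Function.update_eq_self]
  have hparked {y : Fin n} (hy : r < y) (hyj : y ≠ j) : pos y = y ∨ pos y < r := by
    have hyr := h.eq_or_lt y hy.le
    rwa [Function.update_of_ne hyj] at hyr
  refine ⟨hpos ▸ h.isNonCrossing.update hj.le (fun s hrs hsj => ?_) fun s hjs hsj => ?_,
    fun y hy => ?_⟩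
  · rw [Function.update_of_ne hsj.ne]
    rcases hrs.eq_or_lt with rfl | hrs
    · exact hr
    obtain ⟨y, hy, rfl⟩ := hocc s hrs hsj
    have hyj : y ≠ j := by
      rintro rfl
      exact hrs.ne hjr.symm
    rw [(hparked hy hyj).resolve_right hrs.not_gt]
    exact (hparked hy hyj).resolve_right hrs.not_gt
  · rw [Function.update_of_ne hjs.ne'] at hsj ⊢
    exact (hparked (hj.trans hjs) hjs.ne').resolve_left (hsj.trans_lt hjs).ne
  · rcases eq_or_ne y j with rfl | hyj
    · exact .inr (hjr ▸ Nat.lt_succ_self r)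
    · exact (hparked hy hyj).imp_right Nat.lt_succ_of_lt

theorem of_mvpMove (h : IsOnTrack r pos') (hmove : MVPMove (Set.Ioi r) r pos pos') :
    IsOnTrack (r + 1) pos := by
  rcases hmove with ⟨-, rfl⟩ | ⟨j, hj, k, hjr, hk, rfl⟩
  · exact ⟨h.isNonCrossing, fun y hy =>
      (h.eq_or_lt y (Nat.le_of_succ_le hy)).imp_right Nat.lt_succ_of_lt⟩
  · obtain ⟨hr, rfl⟩ := h.eq_of_update hj hjr hk
    refine h.of_update_self hj hr (hjr.trans hr) fun s hrs hsk => ?_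
    by_contra! hfree
    exact hsk.not_ge (hk.2 ⟨hr.symm ▸ hrs, hfree⟩)

end IsOnTrack

theorem exists_isStage_isOnTrack_of_mvpOutcome (h : MVPOutcome p (decPerm n)) (hm : m ≤ n) :
    ∃ pos, IsStage p m pos ∧ IsOnTrack m pos := by
  induction m with
  | zero => exact ⟨id, isStage_zero_id_iff.2 h, isOnTrack_zero_iff.2 rfl⟩
  | succ k ih =>
    obtain ⟨pos', hstage', htrack'⟩ := ih (Nat.le_of_succ_le hm)
    obtain ⟨pos, hstage, hmove⟩ := IsStage.exists_prev (r := ⟨k, hm⟩) hstage'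
    exact ⟨pos, hstage, IsOnTrack.of_mvpMove (r := ⟨k, hm⟩) htrack' hmove⟩

theorem exists_isStage_isOnTrack_of_isNonCrossing (hp : IsNonCrossing (p ∘ decPerm n))
    (hm : m ≤ n) : ∃ pos, IsStage p m pos ∧ IsOnTrack m pos := by
  induction hm using Nat.decreasingInduction with
  | self => exact ⟨_, isStage_self p, hp.isOnTrack⟩
  | of_succ k hk ih =>
    obtain ⟨pos, hstage, htrack⟩ := ih
    obtain ⟨pos', hmove, htrack'⟩ := IsOnTrack.exists_mvpMove (r := ⟨k, hk⟩) htrack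
    exact ⟨pos', IsStage.move (r := ⟨k, hk⟩) hstage hmove, htrack'⟩

theorem mvpOutcome_decPerm_iff :
    MVPOutcome p (decPerm n) ↔ IsNonCrossing (p ∘ decPerm n) := by
  constructor
  · intro h
    obtain ⟨pos, hstage, htrack⟩ := exists_isStage_isOnTrack_of_mvpOutcome h le_rfl
    exact (isStage_self p).unique hstage ▸ htrack.isNonCrossing
  · intro h
    obtain ⟨pos, hstage, htrack⟩ := exists_isStage_isOnTrack_of_isNonCrossing h (Nat.zero_le n)
    exact isStage_zero_id_iff.1 (isOnTrack_zero_iff.1 htrack ▸ hstage)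

end OnTrack

end Parking

section Decreasing

variable {p p' : Fin n → Fin n}

theorem prefCount_eq_of_phi_eq (hp : ∀ j, prefCount p j ≤ 2) (hp' : ∀ j, prefCount p' j ≤ 2)
    (h : Phi p = Phi p') : prefCount p = prefCount p' := by
  funext j
  have hstep := congrArg stepVal (congrFun h j)
  rw [stepVal_phi (hp j), stepVal_phi (hp' j)] at hstep
  omega

theorem comp_decPerm_comp_decPerm (p : Fin n → Fin n) : (p ∘ decPerm n) ∘ decPerm n = p :=
  funext fun i => congrArg p (Fin.rev_rev i)

theorem MVPOutcome.prefCount_le_two (h : MVPOutcome p (decPerm n)) (j : Fin n) :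
    prefCount p j ≤ 2 := by
  rw [← prefCount_comp_perm p (decPerm n)]
  exact (mvpOutcome_decPerm_iff.1 h).prefCount_le_two j

theorem eq_of_phi_eq_of_mvpOutcome (h : MVPOutcome p (decPerm n)) (h' : MVPOutcome p' (decPerm n))
    (hphi : Phi p = Phi p') : p = p' := by
  have hcomp : p ∘ decPerm n = p' ∘ decPerm n :=
    (mvpOutcome_decPerm_iff.1 h).eq_of_phi_eq (mvpOutcome_decPerm_iff.1 h')
      (by rw [phi_comp_perm, phi_comp_perm, hphi])
  exact (decPerm n).surjective.injective_comp_right hcomp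

theorem IsMotzkinPath.exists_mvpOutcome {φ : Fin n → MStep} (hφ : IsMotzkinPath φ) :
    ∃ p, MVPOutcome p (decPerm n) ∧ Phi p = φ := by
  obtain ⟨q, hq, hqφ⟩ := hφ.exists_isNonCrossing_phi_eq
  refine ⟨q ∘ decPerm n, mvpOutcome_decPerm_iff.2 ?_, by rw [phi_comp_perm, hqφ]⟩
  rwa [comp_decPerm_comp_decPerm]

theorem existsUnique_rearrangement (hp : IsParkingFunction p) (hmotz : ∀ j, prefCount p j ≤ 2) :
    ∃! p' : Fin n → Fin n,
      (∃ σ : Equiv.Perm (Fin n), p' = p ∘ σ) ∧ MVPOutcome p' (decPerm n) := by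
  obtain ⟨p', hp', hphi⟩ := ((isMotzkinPath_phi_iff hmotz).2 hp).exists_mvpOutcome
  refine ⟨p', ⟨exists_perm_of_prefCount_eq ?_, hp'⟩, ?_⟩
  · exact prefCount_eq_of_phi_eq hp'.prefCount_le_two hmotz hphi
  · rintro _ ⟨⟨σ, rfl⟩, hσ⟩
    exact eq_of_phi_eq_of_mvpOutcome hσ hp' (by rw [phi_comp_perm, hphi])

theorem bijOn_phi_fibMVP_decPerm (n : ℕ) :
    Set.BijOn Phi (FibMVP (decPerm n)) {φ : Fin n → MStep | IsMotzkinPath φ} := by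
  refine ⟨?_, ?_, ?_⟩
  · rintro p ⟨hp, hout⟩
    exact (isMotzkinPath_phi_iff hout.prefCount_le_two).2 hp
  · rintro p ⟨-, hout⟩ p' ⟨-, hout'⟩ hphi
    exact eq_of_phi_eq_of_mvpOutcome hout hout' hphi
  · rintro φ hφ
    obtain ⟨p, hout, rfl⟩ := IsMotzkinPath.exists_mvpOutcome hφ
    exact ⟨p, ⟨(isMotzkinPath_phi_iff hout.prefCount_le_two).1 hφ, hout⟩, rfl⟩

end Decreasing

/-- every Motzkin parking function has a unique rearrangement
whose MVP outcome is the decreasing permutation `dec_n`; in particular `Φ`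
restricted to `Fib_n(dec_n)` is a bijection onto the Motzkin paths. -/
theorem statement10 (n : ℕ) (p : Fin n → Fin n) (hp : IsParkingFunction p)
    (hmotz : ∀ j, prefCount p j ≤ 2) :
    (∃! p' : Fin n → Fin n,
      (∃ σ : Equiv.Perm (Fin n), p' = p ∘ σ) ∧ MVPOutcome p' (decPerm n)) ∧
    Set.BijOn Phi (FibMVP (decPerm n)) {φ : Fin n → MStep | IsMotzkinPath φ} :=
  ⟨existsUnique_rearrangement hp hmotz, bijOn_phi_fibMVP_decPerm n⟩

end MVPPaper
end
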